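/- arXiv:math/0309415 — 3 statements merged into one kernel-verified Lean document; each statement's English description precedes it below -/
import Mathlib

section
/- (Main Theorem 1.) Let F₁,F₂,P₁,P₂ be holomorphic functions of (v₁,v₂) on an open set Ω ⊆ ℂ², and let w₁,w₂ : Ω → ℂ be holomorphic with Jacobian D := ∂_{v₁}w₁·∂_{v₂}w₂ − ∂_{v₁}w₂·∂_{v₂}w₁ ≠ 0 and J(w₁,w₂) ≠ 0 on Ω, satisfying the over-determined nonlinear system {w₁,w₂;v₁,v₂}_{v₁} = F₁, {w₁,w₂;v₁,v₂}_{v₂} = F₂, [w₁,w₂;v₁,v₂]_{v₁} = P₁, [w₁,w₂;v₁,v₂]_{v₂} = P₂. Set Δ := 1/D and let z : Ω → ℂ be holomorphic with z³ = Δ. Then z satisfies the linear system: ∂_{v₁v₁}z + (1/3)P₁·∂_{v₁}z − F₁·∂_{v₂}z + (∂_{v₂}F₁ − (1/3)∂_{v₁}P₁ − (2/9)P₁² − (2/3)F₁P₂)·z = 0; ∂_{v₁v₂}z − (1/3)P₂·∂_{v₁}z − (1/3)P₁·∂_{v₂}z + ((1/3)∂_{v₁}P₂ + (1/3)∂_{v₂}P₁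 + (1/9)P₁P₂ − F₁F₂)·z = 0; ∂_{v₂v₂}z + (1/3)P₂·∂_{v₂}z − F₂·∂_{v₁}z + (∂_{v₁}F₂ − (1/3)∂_{v₂}P₂ − (2/9)P₂² − (2/3)F₂P₁)·z = 0. -/
open Complex Matrix

noncomputable section

/-- Partial derivative in the first complex variable. -/
def pdx (f : ℂ × ℂ → ℂ) (p : ℂ × ℂ) : ℂ := deriv (fun x => f (x, p.2)) p.1

/-- Partial derivative in the second complex variable. -/
def pdy (f : ℂ × ℂ → ℂ) (p : ℂ × ℂ) : ℂ := deriv (fun y => f (p.1, y)) p.2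

/-- The Jacobian `J(u₁,u₂) = ∂ₓu₁·∂ᵧu₂ − ∂ₓu₂·∂ᵧu₁`. -/
def Jac (u₁ u₂ : ℂ × ℂ → ℂ) (p : ℂ × ℂ) : ℂ :=
  pdx u₁ p * pdy u₂ p - pdx u₂ p * pdy u₁ p

/-- The GL(3) derivative `{u₁,u₂;x,y}ₓ`. -/
def brX (u₁ u₂ : ℂ × ℂ → ℂ) (p : ℂ × ℂ) : ℂ :=
  (pdx u₁ p * pdx (pdx u₂) p - pdx u₂ p * pdx (pdx u₁) p) / Jac u₁ u₂ p

/-- The GL(3) derivative `{u₁,u₂;x,y}ᵧ`. -/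
def brY (u₁ u₂ : ℂ × ℂ → ℂ) (p : ℂ × ℂ) : ℂ :=
  -(pdy u₁ p * pdy (pdy u₂) p - pdy u₂ p * pdy (pdy u₁) p) / Jac u₁ u₂ p

/-- The GL(3) derivative `[u₁,u₂;x,y]ₓ`. -/
def sqX (u₁ u₂ : ℂ × ℂ → ℂ) (p : ℂ × ℂ) : ℂ :=
  ((pdy u₁ p * pdx (pdx u₂) p - pdy u₂ p * pdx (pdx u₁) p)
      + 2 * (pdx u₁ p * pdx (pdy u₂) p - pdx u₂ p * pdx (pdy u₁) p)) / Jac u₁ u₂ p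

/-- The GL(3) derivative `[u₁,u₂;x,y]ᵧ`. -/
def sqY (u₁ u₂ : ℂ × ℂ → ℂ) (p : ℂ × ℂ) : ℂ :=
  -((pdx u₁ p * pdy (pdy u₂) p - pdx u₂ p * pdy (pdy u₁) p)
      + 2 * (pdy u₁ p * pdx (pdy u₂) p - pdy u₂ p * pdx (pdy u₁) p)) / Jac u₁ u₂ p

/-- A directional derivative of a holomorphic function on an open subset of a finite-dimensional
space is holomorphic. -/
theorem differentiableOn_fderiv_apply_const {E : Type*} [NormedAddCommGroup E] [NormedSpace ℂ E]
    [FiniteDimensional ℂ E] {f : E → ℂ} {U : Set E} (hU : IsOpen U)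
    (hf : DifferentiableOn ℂ f U) (v : E) (hv : ‖v‖ ≤ 1) :
    DifferentiableOn ℂ (fun p => fderiv ℂ f p v) U := by
  intro p hp
  apply DifferentiableAt.differentiableWithinAt
  borelize E
  have : ProperSpace E := FiniteDimensional.proper ℂ E
  have hcont : ContinuousAt f p := (hf.differentiableAt (hU.mem_nhds hp)).continuousAt
  obtain ⟨R, hR, hRU⟩ := Metric.mem_nhds_iff.1
    (Filter.inter_mem (hU.mem_nhds hp) (hcont (Metric.ball_mem_nhds (f p) one_pos)))
  obtain ⟨r, hr, rfl⟩ : ∃ r : ℝ, 0 < r ∧ R = 3 * r := ⟨R / 3, by positivity, by ring⟩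
  have hdiff : ∀ q ∈ Metric.ball p (2 * r), DifferentiableAt ℂ f q := fun q hq =>
    hf.differentiableAt (hU.mem_nhds (hRU (Metric.ball_subset_ball (by linarith) hq)).1)
  have hbound : ∀ q ∈ Metric.ball p (2 * r), ‖fderiv ℂ f q‖ ≤ 2 / r := by
    intro q hq
    have hsub : Metric.ball q r ⊆ Metric.ball p (3 * r) :=
      Metric.ball_subset_ball' (by rw [Metric.mem_ball] at hq; linarith)
    refine Complex.norm_fderiv_le_div_of_mapsTo_ball
      (hf.mono fun x hx => (hRU (hsub hx)).1) (fun x hx => ?_) hr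
    have h1 : Dist.dist (f x) (f p) < 1 := (hRU (hsub hx)).2
    have h2 : Dist.dist (f q) (f p) < 1 := (hRU (hsub (Metric.mem_ball_self hr))).2
    rw [Metric.mem_closedBall]
    linarith [dist_triangle_right (f x) (f q) (f p)]
  have hmem : ∀ x ∈ Metric.ball p r, ∀ s : ℂ, ‖s‖ ≤ r → x + s • v ∈ Metric.ball p (2 * r) := by
    intro x hx s hs
    rw [mem_ball_iff_norm] at hx ⊢
    calc ‖x + s • v - p‖ = ‖(x - p) + s • v‖ := by congr 1; abel
      _ ≤ ‖x - p‖ + ‖s‖ * ‖v‖ := (norm_add_le _ _).trans_eq (by rw [norm_smul])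
      _ < 2 * r := by nlinarith [norm_nonneg s, norm_nonneg v]
  have hcirc : ∀ t : ℝ, ‖circleMap 0 r t‖ ≤ r := fun t => by
    rw [norm_circleMap_zero, abs_of_pos hr]
  have hformula : ∀ x ∈ Metric.ball p r, fderiv ℂ f x v =
      (2 * Real.pi * I : ℂ)⁻¹ * ∮ s in C(0, r), (1 / (s - 0) ^ 2) • f (x + s • v) := by
    intro x hx
    have hline : ∀ s : ℂ, HasDerivAt (fun s : ℂ => x + s • v) v s := fun s => by
      simpa using ((hasDerivAt_id s).smul_const v).const_add x
    have hd : DifferentiableOn ℂ (fun s : ℂ => f (x + s • v)) (Metric.closedBall 0 r) := by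
      intro s hs
      exact ((hdiff _ (hmem x hx s (by simpa using hs))).comp s
        (hline s).differentiableAt).differentiableWithinAt
    rw [hd.deriv_eq_smul_circleIntegral hr, smul_eq_mul, inv_mul_cancel_left₀ two_pi_I_ne_zero]
    have hx0 : HasFDerivAt f (fderiv ℂ f x) (x + (0 : ℂ) • v) := by
      simpa using (hdiff x (Metric.ball_subset_ball (by linarith) hx)).hasFDerivAt
    exact (hx0.comp_hasDerivAt (0 : ℂ) (hline 0)).deriv.symm
  have hint : DifferentiableAt ℂ
      (fun x => ∮ s in C(0, r), (1 / (s - 0) ^ 2) • f (x + s • v)) p := by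
    have hpoint : ∀ x ∈ Metric.ball p r, Continuous fun t : ℝ => f (x + circleMap 0 r t • v) := by
      intro x hx
      rw [continuous_iff_continuousAt]
      intro t
      refine ContinuousAt.comp (f := fun t : ℝ => x + circleMap 0 r t • v)
        (hdiff _ (hmem x hx _ (hcirc t))).continuousAt ?_
      exact (continuous_const.add ((continuous_circleMap 0 r).smul continuous_const)).continuousAt
    have hkernel : Continuous fun t : ℝ =>
        deriv (circleMap 0 r) t * (1 / (circleMap 0 r t - 0) ^ 2) := by
      simp only [deriv_circleMap, sub_zero]
      refine ((continuous_circleMap 0 r).mul continuous_const).mul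
        (continuous_const.div ((continuous_circleMap 0 r).pow 2) fun t => ?_)
      exact pow_ne_zero 2 (circleMap_ne_center hr.ne')
    have hF : ∀ x ∈ Metric.ball p r, Continuous fun t : ℝ =>
        deriv (circleMap 0 r) t • (1 / (circleMap 0 r t - 0) ^ 2) •
          f (x + circleMap 0 r t • v) := fun x hx => by
      simpa only [smul_eq_mul, mul_assoc] using hkernel.fun_mul (hpoint x hx)
    refine (intervalIntegral.hasFDerivAt_integral_of_dominated_of_fderiv_le
      (μ := MeasureTheory.volume)
      (F' := fun x t => (deriv (circleMap 0 r) t * (1 / (circleMap 0 r t - 0) ^ 2)) •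
        fderiv ℂ f (x + circleMap 0 r t • v))
      (bound := fun t => ‖deriv (circleMap 0 r) t * (1 / (circleMap 0 r t - 0) ^ 2)‖ * (2 / r))
      (Metric.ball_mem_nhds p hr) ?_ ?_ ?_ ?_ ?_ ?_).differentiableAt
    · filter_upwards [Metric.ball_mem_nhds p hr] with x hx
      exact (hF x hx).aestronglyMeasurable
    · exact (hF p (Metric.mem_ball_self hr)).intervalIntegrable _ _
    · refine hkernel.aestronglyMeasurable.smul (Measurable.aestronglyMeasurable ?_)
      exact (measurable_fderiv ℂ f).comp (continuous_const.add
        ((continuous_circleMap 0 r).smul continuous_const)).measurable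
    · refine Filter.Eventually.of_forall fun t _ x hx => ?_
      rw [norm_smul]
      exact mul_le_mul_of_nonneg_left (hbound _ (hmem x hx _ (hcirc t))) (norm_nonneg _)
    · exact (hkernel.norm.mul continuous_const).intervalIntegrable _ _
    · refine Filter.Eventually.of_forall fun t _ x hx => ?_
      have h := (hdiff _ (hmem x hx _ (hcirc t))).hasFDerivAt.comp x
        ((hasFDerivAt_id x).add_const (circleMap 0 r t • v))
      refine (h.const_mul
        (deriv (circleMap 0 r) t * (1 / (circleMap 0 r t - 0) ^ 2))).congr_of_eventuallyEq
          (Filter.Eventually.of_forall fun y => ?_)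
      simp only [smul_eq_mul, mul_assoc, Function.comp_apply, id]
  refine (hint.const_mul (2 * Real.pi * I : ℂ)⁻¹).congr_of_eventuallyEq ?_
  filter_upwards [Metric.ball_mem_nhds p hr] with x hx using hformula x hx

theorem DifferentiableAt.pdx_eq {f : ℂ × ℂ → ℂ} {p : ℂ × ℂ} (hf : DifferentiableAt ℂ f p) :
    pdx f p = fderiv ℂ f p (1, 0) :=
  (hf.hasFDerivAt.comp_hasDerivAt p.1
    ((hasDerivAt_id p.1).prodMk (hasDerivAt_const p.1 p.2))).deriv

theorem DifferentiableAt.pdy_eq {f : ℂ × ℂ → ℂ} {p : ℂ × ℂ} (hf : DifferentiableAt ℂ f p) :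
    pdy f p = fderiv ℂ f p (0, 1) :=
  (hf.hasFDerivAt.comp_hasDerivAt p.2
    ((hasDerivAt_const p.2 p.1).prodMk (hasDerivAt_id p.2))).deriv

section

variable {Ω : Set (ℂ × ℂ)} {f g : ℂ × ℂ → ℂ} {p : ℂ × ℂ}

theorem DifferentiableOn.pdx (hΩ : IsOpen Ω) (hf : DifferentiableOn ℂ f Ω) :
    DifferentiableOn ℂ (pdx f) Ω :=
  (differentiableOn_fderiv_apply_const hΩ hf (1, 0) (by simp)).congr fun _ hp =>
    (hf.differentiableAt (hΩ.mem_nhds hp)).pdx_eq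

theorem DifferentiableOn.pdy (hΩ : IsOpen Ω) (hf : DifferentiableOn ℂ f Ω) :
    DifferentiableOn ℂ (pdy f) Ω :=
  (differentiableOn_fderiv_apply_const hΩ hf (0, 1) (by simp)).congr fun _ hp =>
    (hf.differentiableAt (hΩ.mem_nhds hp)).pdy_eq

theorem pdx_congr (hΩ : IsOpen Ω) (h : Set.EqOn f g Ω) (hp : p ∈ Ω) : pdx f p = pdx g p := by
  have hc : ContinuousAt (fun x : ℂ => (x, p.2)) p.1 := by fun_prop
  refine Filter.EventuallyEq.deriv_eq ?_
  filter_upwards [hc.preimage_mem_nhds (hΩ.mem_nhds hp)] with x hx using h hx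

theorem pdy_congr (hΩ : IsOpen Ω) (h : Set.EqOn f g Ω) (hp : p ∈ Ω) : pdy f p = pdy g p := by
  have hc : ContinuousAt (fun y : ℂ => (p.1, y)) p.2 := by fun_prop
  refine Filter.EventuallyEq.deriv_eq ?_
  filter_upwards [hc.preimage_mem_nhds (hΩ.mem_nhds hp)] with y hy using h hy

/-- Mixed partial derivatives of a holomorphic function commute. -/
theorem pdy_pdx_eq_pdx_pdy (hΩ : IsOpen Ω) (hf : DifferentiableOn ℂ f Ω) (hp : p ∈ Ω) :
    pdy (pdx f) p = pdx (pdy f) p := by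
  have hx := (hf.pdx hΩ).differentiableAt (hΩ.mem_nhds hp)
  have hy := (hf.pdy hΩ).differentiableAt (hΩ.mem_nhds hp)
  have hfd : ∀ᶠ q in nhds p, HasFDerivAt f (pdx f q • ContinuousLinearMap.fst ℂ ℂ ℂ +
      pdy f q • ContinuousLinearMap.snd ℂ ℂ ℂ) q := by
    filter_upwards [hΩ.mem_nhds hp] with q hq
    have h := hf.differentiableAt (hΩ.mem_nhds hq)
    convert h.hasFDerivAt using 1
    ext <;> simp [h.pdx_eq, h.pdy_eq]
  have h := second_derivative_symmetric_of_eventually hfd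
    ((hx.hasFDerivAt.smul_const (ContinuousLinearMap.fst ℂ ℂ ℂ)).add
      (hy.hasFDerivAt.smul_const (ContinuousLinearMap.snd ℂ ℂ ℂ))) (0, 1) (1, 0)
  simpa [hx.pdy_eq, hy.pdx_eq] using h

theorem pdx_add (hf : DifferentiableAt ℂ f p) (hg : DifferentiableAt ℂ g p) :
    pdx (fun q => f q + g q) p = pdx f p + pdx g p := by
  rw [(hf.fun_add hg).pdx_eq, hf.pdx_eq, hg.pdx_eq, fderiv_fun_add hf hg]; rfl

theorem pdx_sub (hf : DifferentiableAt ℂ f p) (hg : DifferentiableAt ℂ g p) :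
    pdx (fun q => f q - g q) p = pdx f p - pdx g p := by
  rw [(hf.fun_sub hg).pdx_eq, hf.pdx_eq, hg.pdx_eq, fderiv_fun_sub hf hg]; rfl

theorem pdx_mul (hf : DifferentiableAt ℂ f p) (hg : DifferentiableAt ℂ g p) :
    pdx (fun q => f q * g q) p = pdx f p * g p + f p * pdx g p := by
  rw [(hf.fun_mul hg).pdx_eq, hf.pdx_eq, hg.pdx_eq, fderiv_fun_mul hf hg]
  simp [mul_comm, add_comm]

theorem pdx_const_mul (c : ℂ) : pdx (fun q => c * f q) p = c * pdx f p := by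
  simp [pdx]

theorem pdy_add (hf : DifferentiableAt ℂ f p) (hg : DifferentiableAt ℂ g p) :
    pdy (fun q => f q + g q) p = pdy f p + pdy g p := by
  rw [(hf.fun_add hg).pdy_eq, hf.pdy_eq, hg.pdy_eq, fderiv_fun_add hf hg]; rfl

theorem pdy_sub (hf : DifferentiableAt ℂ f p) (hg : DifferentiableAt ℂ g p) :
    pdy (fun q => f q - g q) p = pdy f p - pdy g p := by
  rw [(hf.fun_sub hg).pdy_eq, hf.pdy_eq, hg.pdy_eq, fderiv_fun_sub hf hg]; rfl

theorem pdy_mul (hf : DifferentiableAt ℂ f p) (hg : DifferentiableAt ℂ g p) :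
    pdy (fun q => f q * g q) p = pdy f p * g p + f p * pdy g p := by
  rw [(hf.fun_mul hg).pdy_eq, hf.pdy_eq, hg.pdy_eq, fderiv_fun_mul hf hg]
  simp [mul_comm, add_comm]

theorem pdy_const_mul (c : ℂ) : pdy (fun q => c * f q) p = c * pdy f p := by
  simp [pdy]

end

/-- If `u ∧ v ≠ 0` for two vectors `u = (a₁, b₁)`, `v = (a₂, b₂)`, a linear form vanishing on both
is zero. -/
theorem eq_zero_and_eq_zero_of_det_ne_zero {a₁ a₂ b₁ b₂ s t : ℂ} (h : a₁ * b₂ - a₂ * b₁ ≠ 0)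
    (h₁ : s * a₁ + t * b₁ = 0) (h₂ : s * a₂ + t * b₂ = 0) : s = 0 ∧ t = 0 := by
  constructor
  · refine (mul_eq_zero.1 (?_ : s * (a₁ * b₂ - a₂ * b₁) = 0)).resolve_right h
    linear_combination b₂ * h₁ - b₁ * h₂
  · refine (mul_eq_zero.1 (?_ : t * (a₁ * b₂ - a₂ * b₁) = 0)).resolve_right h
    linear_combination a₁ * h₂ - a₂ * h₁

section

variable {Ω : Set (ℂ × ℂ)} {α β γ δ F G : ℂ × ℂ → ℂ}

/-- Equality of the third derivatives of a solution of
`w_xx = α w_x + F w_y`, `w_xy = β w_x + γ w_y`, `w_yy = G w_x + δ w_y`. -/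
theorem third_derivative_relations (hΩ : IsOpen Ω)
    (hα : DifferentiableOn ℂ α Ω) (hβ : DifferentiableOn ℂ β Ω) (hγ : DifferentiableOn ℂ γ Ω)
    (hδ : DifferentiableOn ℂ δ Ω) (hF : DifferentiableOn ℂ F Ω) (hG : DifferentiableOn ℂ G Ω)
    {w : ℂ × ℂ → ℂ} (hw : DifferentiableOn ℂ w Ω)
    (hxx : ∀ q ∈ Ω, pdx (pdx w) q = α q * pdx w q + F q * pdy w q)
    (hxy : ∀ q ∈ Ω, pdx (pdy w) q = β q * pdx w q + γ q * pdy w q)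
    (hyy : ∀ q ∈ Ω, pdy (pdy w) q = G q * pdx w q + δ q * pdy w q)
    {p : ℂ × ℂ} (hp : p ∈ Ω) :
    (pdy α p + F p * G p - pdx β p - γ p * β p) * pdx w p +
      (α p * γ p + pdy F p + F p * δ p - β p * F p - pdx γ p - γ p ^ 2) * pdy w p = 0 ∧
    (pdx G p + G p * α p + δ p * β p - pdy β p - β p ^ 2 - γ p * G p) * pdx w p +
      (G p * F p + pdx δ p - β p * γ p - pdy γ p) * pdy w p = 0 := by
  have hat : ∀ {f : ℂ × ℂ → ℂ}, DifferentiableOn ℂ f Ω → DifferentiableAt ℂ f p :=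
    fun hf => hf.differentiableAt (hΩ.mem_nhds hp)
  have hwx := hat (hw.pdx hΩ)
  have hwy := hat (hw.pdy hΩ)
  have hcomm := pdy_pdx_eq_pdx_pdy hΩ hw hp
  have hX := pdy_pdx_eq_pdx_pdy hΩ (hw.pdx hΩ) hp
  have hY := pdy_pdx_eq_pdx_pdy hΩ (hw.pdy hΩ) hp
  rw [pdx_congr hΩ (fun q hq => pdy_pdx_eq_pdx_pdy hΩ hw hq) hp, pdx_congr hΩ hxy hp,
    pdy_congr hΩ hxx hp, pdy_add ((hat hα).fun_mul hwx) ((hat hF).fun_mul hwy),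
    pdx_add ((hat hβ).fun_mul hwx) ((hat hγ).fun_mul hwy),
    pdy_mul (hat hα) hwx, pdy_mul (hat hF) hwy, pdx_mul (hat hβ) hwx, pdx_mul (hat hγ) hwy,
    hcomm, hxx p hp, hxy p hp, hyy p hp] at hX
  rw [pdy_congr hΩ hxy hp, pdx_congr hΩ hyy hp,
    pdx_add ((hat hG).fun_mul hwx) ((hat hδ).fun_mul hwy),
    pdy_add ((hat hβ).fun_mul hwx) ((hat hγ).fun_mul hwy),
    pdx_mul (hat hG) hwx, pdx_mul (hat hδ) hwy, pdy_mul (hat hβ) hwx, pdy_mul (hat hγ) hwy,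
    hcomm, hxx p hp, hxy p hp, hyy p hp] at hY
  exact ⟨by linear_combination hX, by linear_combination -hY⟩

/-- Compatibility conditions of the system `w_xx = α w_x + F w_y`, `w_xy = β w_x + γ w_y`,
`w_yy = G w_x + δ w_y` admitting two solutions with nonvanishing Jacobian. -/
theorem compatibility_of_jac_ne_zero (hΩ : IsOpen Ω)
    (hα : DifferentiableOn ℂ α Ω) (hβ : DifferentiableOn ℂ β Ω) (hγ : DifferentiableOn ℂ γ Ω)
    (hδ : DifferentiableOn ℂ δ Ω) (hF : DifferentiableOn ℂ F Ω) (hG : DifferentiableOn ℂ G Ω)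
    {w₁ w₂ : ℂ × ℂ → ℂ} (hw₁ : DifferentiableOn ℂ w₁ Ω) (hw₂ : DifferentiableOn ℂ w₂ Ω)
    (hxx : ∀ w ∈ ({w₁, w₂} : Set _), ∀ q ∈ Ω, pdx (pdx w) q = α q * pdx w q + F q * pdy w q)
    (hxy : ∀ w ∈ ({w₁, w₂} : Set _), ∀ q ∈ Ω, pdx (pdy w) q = β q * pdx w q + γ q * pdy w q)
    (hyy : ∀ w ∈ ({w₁, w₂} : Set _), ∀ q ∈ Ω, pdy (pdy w) q = G q * pdx w q + δ q * pdy w q)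
    {p : ℂ × ℂ} (hp : p ∈ Ω) (hJ : Jac w₁ w₂ p ≠ 0) :
    pdy α p + F p * G p - pdx β p - γ p * β p = 0 ∧
    α p * γ p + pdy F p + F p * δ p - β p * F p - pdx γ p - γ p ^ 2 = 0 ∧
    pdx G p + G p * α p + δ p * β p - pdy β p - β p ^ 2 - γ p * G p = 0 := by
  have h₁ := third_derivative_relations hΩ hα hβ hγ hδ hF hG hw₁
    (hxx w₁ (by simp)) (hxy w₁ (by simp)) (hyy w₁ (by simp)) hp
  have h₂ := third_derivative_relations hΩ hα hβ hγ hδ hF hG hw₂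
    (hxx w₂ (by simp)) (hxy w₂ (by simp)) (hyy w₂ (by simp)) hp
  have hX := eq_zero_and_eq_zero_of_det_ne_zero hJ h₁.1 h₂.1
  have hY := eq_zero_and_eq_zero_of_det_ne_zero hJ h₁.2 h₂.2
  exact ⟨hX.1, hX.2, hY.1⟩

end

/-- The second derivatives of `w₁` and `w₂` in terms of the first ones, the `GL(3)` derivatives
and the logarithmic derivatives `-3 u`, `-3 v` of the Jacobian. -/
theorem second_derivatives_eq {w₁ w₂ : ℂ × ℂ → ℂ} {q : ℂ × ℂ} {u v : ℂ} (hJ : Jac w₁ w₂ q ≠ 0)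
    (hu : pdx (pdx w₁) q * pdy w₂ q + pdx w₁ q * pdx (pdy w₂) q
      - (pdx (pdx w₂) q * pdy w₁ q + pdx w₂ q * pdx (pdy w₁) q) = -3 * u * Jac w₁ w₂ q)
    (hv : pdx (pdy w₁) q * pdy w₂ q + pdx w₁ q * pdy (pdy w₂) q
      - (pdx (pdy w₂) q * pdy w₁ q + pdx w₂ q * pdy (pdy w₁) q) = -3 * v * Jac w₁ w₂ q) :
    ∀ w ∈ ({w₁, w₂} : Set _),
      pdx (pdx w) q = (-1 / 3 * sqX w₁ w₂ q + -2 * u) * pdx w q + brX w₁ w₂ q * pdy w q ∧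
      pdx (pdy w) q = (1 / 3 * sqY w₁ w₂ q - v) * pdx w q
        + (1 / 3 * sqX w₁ w₂ q - u) * pdy w q ∧
      pdy (pdy w) q = brY w₁ w₂ q * pdx w q + (-1 / 3 * sqY w₁ w₂ q + -2 * v) * pdy w q := by
  have hF := div_mul_cancel₀ (pdx w₁ q * pdx (pdx w₂) q - pdx w₂ q * pdx (pdx w₁) q) hJ
  have hG := div_mul_cancel₀ (-(pdy w₁ q * pdy (pdy w₂) q - pdy w₂ q * pdy (pdy w₁) q)) hJ
  have hP := div_mul_cancel₀ ((pdy w₁ q * pdx (pdx w₂) q - pdy w₂ q * pdx (pdx w₁) q)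
      + 2 * (pdx w₁ q * pdx (pdy w₂) q - pdx w₂ q * pdx (pdy w₁) q)) hJ
  have hQ := div_mul_cancel₀ (-((pdx w₁ q * pdy (pdy w₂) q - pdx w₂ q * pdy (pdy w₁) q)
      + 2 * (pdy w₁ q * pdx (pdy w₂) q - pdy w₂ q * pdx (pdy w₁) q))) hJ
  rw [← brX] at hF
  rw [← brY] at hG
  rw [← sqX] at hP
  rw [← sqY] at hQ
  generalize brX w₁ w₂ q = F at *
  generalize brY w₁ w₂ q = G at *
  generalize sqX w₁ w₂ q = P at *
  generalize sqY w₁ w₂ q = Q at *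
  have hdet : Jac w₁ w₂ q = pdx w₁ q * pdy w₂ q - pdx w₂ q * pdy w₁ q := rfl
  rintro w (rfl | rfl)
  all_goals
    refine ⟨?_, ?_, ?_⟩ <;> apply mul_right_cancel₀ hJ
    · linear_combination pdx (pdx w) q * hdet - pdy w q * hF + pdx w q / 3 * hP
        + 2 / 3 * pdx w q * hu
    · linear_combination pdx (pdy w) q * hdet - pdy w q / 3 * hP + pdy w q / 3 * hu
        - pdx w q / 3 * hQ + pdx w q / 3 * hv
    · linear_combination pdy (pdy w) q * hdet - pdx w q * hG + pdy w q / 3 * hQ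
        + 2 / 3 * pdy w q * hv

/-- If `z³ J = 1` on `Ω`, then `z_x / z` and `z_y / z` are `-1/3` times the logarithmic derivatives
of `J`. -/
theorem logDeriv_of_cube_mul_eq_one {Ω : Set (ℂ × ℂ)} (hΩ : IsOpen Ω) {z J : ℂ × ℂ → ℂ}
    (hz : DifferentiableOn ℂ z Ω) (hJ : DifferentiableOn ℂ J Ω)
    (h : ∀ q ∈ Ω, z q * (z q * z q) * J q = 1) {p : ℂ × ℂ} (hp : p ∈ Ω) :
    pdx J p = -3 * (pdx z p / z p) * J p ∧ pdy J p = -3 * (pdy z p / z p) * J p := by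
  have hz' := hz.differentiableAt (hΩ.mem_nhds hp)
  have hJ' := hJ.differentiableAt (hΩ.mem_nhds hp)
  have hz0 : z p ≠ 0 := fun h0 => by simpa [h0] using h p hp
  have hx := pdx_congr (g := fun _ => 1) hΩ h hp
  have hy := pdy_congr (g := fun _ => 1) hΩ h hp
  rw [pdx_mul (hz'.fun_mul (hz'.fun_mul hz')) hJ', pdx_mul hz' (hz'.fun_mul hz'),
    pdx_mul hz' hz', show pdx (fun _ => (1 : ℂ)) p = 0 by simp [pdx]] at hx
  rw [pdy_mul (hz'.fun_mul (hz'.fun_mul hz')) hJ', pdy_mul hz' (hz'.fun_mul hz'),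
    pdy_mul hz' hz', show pdy (fun _ => (1 : ℂ)) p = 0 by simp [pdy]] at hy
  constructor <;> field_simp <;> apply mul_left_cancel₀ (pow_ne_zero 2 hz0)
  · linear_combination hx
  · linear_combination hy

/-- **Main Theorem 1.** If `(w₁,w₂)` solves the over-determined
nonlinear system with right hand sides `F₁,F₂,P₁,P₂` and `z³ = Δ = 1/D` where `D` is
the Jacobian of `(w₁,w₂)` with respect to `(v₁,v₂)`, then `z` solves the associated
linear system. Here the independent variables are `(v₁,v₂)` and `pdx`/`pdy` denote
`∂_{v₁}`/`∂_{v₂}`. -/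
theorem statement10 (Ω : Set (ℂ × ℂ)) (hΩ : IsOpen Ω)
    (F₁ F₂ P₁ P₂ : ℂ × ℂ → ℂ)
    (hF₁ : DifferentiableOn ℂ F₁ Ω) (hF₂ : DifferentiableOn ℂ F₂ Ω)
    (hP₁ : DifferentiableOn ℂ P₁ Ω) (hP₂ : DifferentiableOn ℂ P₂ Ω)
    (w₁ w₂ : ℂ × ℂ → ℂ)
    (hw₁ : DifferentiableOn ℂ w₁ Ω) (hw₂ : DifferentiableOn ℂ w₂ Ω)
    (hD : ∀ p ∈ Ω, Jac w₁ w₂ p ≠ 0)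
    (hbrX : ∀ p ∈ Ω, brX w₁ w₂ p = F₁ p)
    (hbrY : ∀ p ∈ Ω, brY w₁ w₂ p = F₂ p)
    (hsqX : ∀ p ∈ Ω, sqX w₁ w₂ p = P₁ p)
    (hsqY : ∀ p ∈ Ω, sqY w₁ w₂ p = P₂ p)
    (z : ℂ × ℂ → ℂ) (hz : DifferentiableOn ℂ z Ω)
    (hz3 : ∀ p ∈ Ω, z p ^ 3 = (Jac w₁ w₂ p)⁻¹) :
    ∀ p ∈ Ω,
      (pdx (pdx z) p + (1/3) * P₁ p * pdx z p - F₁ p * pdy z p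
        + (pdy F₁ p - (1/3) * pdx P₁ p - (2/9) * P₁ p ^ 2
            - (2/3) * F₁ p * P₂ p) * z p = 0) ∧
      (pdx (pdy z) p - (1/3) * P₂ p * pdx z p - (1/3) * P₁ p * pdy z p
        + ((1/3) * pdx P₂ p + (1/3) * pdy P₁ p + (1/9) * P₁ p * P₂ p
            - F₁ p * F₂ p) * z p = 0) ∧
      (pdy (pdy z) p + (1/3) * P₂ p * pdy z p - F₂ p * pdx z p
        + (pdx F₂ p - (1/3) * pdy P₂ p - (2/9) * P₂ p ^ 2
            - (2/3) * F₂ p * P₁ p) * z p = 0) := by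
  have hz0 : ∀ q ∈ Ω, z q ≠ 0 := fun q hq h0 => by
    simpa [h0, eq_comm, hD q hq] using hz3 q hq
  obtain ⟨u, hu_def⟩ : ∃ u : ℂ × ℂ → ℂ, ∀ q, u q = pdx z q / z q := ⟨_, fun _ => rfl⟩
  obtain ⟨v, hv_def⟩ : ∃ v : ℂ × ℂ → ℂ, ∀ q, v q = pdy z q / z q := ⟨_, fun _ => rfl⟩
  have hu : DifferentiableOn ℂ u Ω :=
    ((hz.pdx hΩ).fun_mul (hz.fun_inv hz0)).congr fun q _ => by rw [hu_def, div_eq_mul_inv]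
  have hv : DifferentiableOn ℂ v Ω :=
    ((hz.pdy hΩ).fun_mul (hz.fun_inv hz0)).congr fun q _ => by rw [hv_def, div_eq_mul_inv]
  have hzx : ∀ q ∈ Ω, pdx z q = z q * u q := fun q hq => by
    rw [hu_def, mul_div_cancel₀ _ (hz0 q hq)]
  have hzy : ∀ q ∈ Ω, pdy z q = z q * v q := fun q hq => by
    rw [hv_def, mul_div_cancel₀ _ (hz0 q hq)]
  have hJac : DifferentiableOn ℂ (Jac w₁ w₂) Ω :=
    ((hw₁.pdx hΩ).fun_mul (hw₂.pdy hΩ)).fun_sub ((hw₂.pdx hΩ).fun_mul (hw₁.pdy hΩ))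
  have hcube : ∀ q ∈ Ω, z q * (z q * z q) * Jac w₁ w₂ q = 1 := fun q hq => by
    rw [← inv_mul_cancel₀ (hD q hq), ← hz3 q hq]; ring
  have hsecond : ∀ q ∈ Ω, ∀ w ∈ ({w₁, w₂} : Set _),
      pdx (pdx w) q = (-1 / 3 * P₁ q + -2 * u q) * pdx w q + F₁ q * pdy w q ∧
      pdx (pdy w) q = (1 / 3 * P₂ q - v q) * pdx w q + (1 / 3 * P₁ q - u q) * pdy w q ∧
      pdy (pdy w) q = F₂ q * pdx w q + (-1 / 3 * P₂ q + -2 * v q) * pdy w q := by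
    intro q hq
    have hat : ∀ {f : ℂ × ℂ → ℂ}, DifferentiableOn ℂ f Ω → DifferentiableAt ℂ f q :=
      fun hf => hf.differentiableAt (hΩ.mem_nhds hq)
    have h1x := hat (hw₁.pdx hΩ)
    have h1y := hat (hw₁.pdy hΩ)
    have h2x := hat (hw₂.pdx hΩ)
    have h2y := hat (hw₂.pdy hΩ)
    have hJxy := logDeriv_of_cube_mul_eq_one hΩ hz hJac hcube hq
    rw [← hu_def, ← hv_def] at hJxy
    rw [← hbrX q hq, ← hbrY q hq, ← hsqX q hq, ← hsqY q hq]
    refine second_derivatives_eq (hD q hq) ?_ ?_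
    · rw [← hJxy.1]
      exact ((pdx_sub (h1x.fun_mul h2y) (h2x.fun_mul h1y)).trans
        (by rw [pdx_mul h1x h2y, pdx_mul h2x h1y])).symm
    · rw [← hJxy.2, ← pdy_pdx_eq_pdx_pdy hΩ hw₁ hq, ← pdy_pdx_eq_pdx_pdy hΩ hw₂ hq]
      exact ((pdy_sub (h1x.fun_mul h2y) (h2x.fun_mul h1y)).trans
        (by rw [pdy_mul h1x h2y, pdy_mul h2x h1y])).symm
  intro p hp
  have hat : ∀ {f : ℂ × ℂ → ℂ}, DifferentiableOn ℂ f Ω → DifferentiableAt ℂ f p :=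
    fun hf => hf.differentiableAt (hΩ.mem_nhds hp)
  have hu' := hat hu
  have hv' := hat hv
  have hP₁' := hat hP₁
  have hP₂' := hat hP₂
  obtain ⟨h1, h2, h3⟩ := compatibility_of_jac_ne_zero hΩ
    ((hP₁.const_mul _).fun_add (hu.const_mul _)) ((hP₂.const_mul _).fun_sub hv)
    ((hP₁.const_mul _).fun_sub hu) ((hP₂.const_mul _).fun_add (hv.const_mul _)) hF₁ hF₂ hw₁ hw₂
    (fun w hw q hq => (hsecond q hq w hw).1) (fun w hw q hq => (hsecond q hq w hw).2.1)
    (fun w hw q hq => (hsecond q hq w hw).2.2) hp (hD p hp)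
  rw [pdy_add (hP₁'.const_mul _) (hu'.const_mul _), pdy_const_mul, pdy_const_mul,
    pdx_sub (hP₂'.const_mul _) hv', pdx_const_mul] at h1
  rw [pdx_sub (hP₁'.const_mul _) hu', pdx_const_mul] at h2
  rw [pdy_sub (hP₂'.const_mul _) hv', pdy_const_mul] at h3
  have hzxx := pdx_congr hΩ hzx hp
  have hzxy := pdx_congr hΩ hzy hp
  have hzyx := pdy_congr hΩ hzx hp
  have hzyy := pdy_congr hΩ hzy hp
  rw [pdx_mul (hat hz) hu', hzx p hp] at hzxx
  rw [pdx_mul (hat hz) hv', hzx p hp] at hzxy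
  rw [pdy_mul (hat hz) hu', hzy p hp, pdy_pdx_eq_pdx_pdy hΩ hz hp] at hzyx
  rw [pdy_mul (hat hz) hv', hzy p hp] at hzyy
  rw [hzxx, hzyy, hzx p hp, hzy p hp]
  refine ⟨?_, ?_, ?_⟩
  · linear_combination z p * h2
  · linear_combination 2 * hzyx - hzxy - z p * h1
  · linear_combination z p * h3
end
end

section
/- (Main Theorem 2, transformation part.) Fix α,β,γ ∈ ℂ and let Ω ⊆ ℂ² be an open set of points (v₁,v₂) with v₁,v₂ ∉ {0,1} and v₁ ≠ v₂. Set P₁ := α/v₁ + β/(v₁−1) + γ/(v₁−v₂), P₂ := α/v₂ + β/(v₂−1) + γ/(v₂−v₁), F₁ := −γv₂(v₂−1)/(v₁(v₁−1)(v₁−v₂)), F₂ := −γv₁(v₁−1)/(v₂(v₂−1)(v₂−v₁)). Let g : Ω → ℂ be holomorphic and nonvanishing with ∂_{v₁}g = (α/(3v₁) + β/(3(v₁−1)) − 2γ/(3(v₁−v₂)))·g and ∂_{v₂}g = (α/(3v₂) + β/(3(v₂−1)) − 2γ/(3(v₂−v₁)))·g. Suppose the holomorphic function z : Ω → ℂ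 satisfies the three equations: ∂_{v₁v₁}z + (1/3)P₁∂_{v₁}z − F₁∂_{v₂}z + (∂_{v₂}F₁ − (1/3)∂_{v₁}P₁ − (2/9)P₁² − (2/3)F₁P₂)z = 0; ∂_{v₁v₂}z − (1/3)P₂∂_{v₁}z − (1/3)P₁∂_{v₂}z + ((1/3)∂_{v₁}P₂ + (1/3)∂_{v₂}P₁ + (1/9)P₁P₂ − F₁F₂)z = 0; ∂_{v₂v₂}z + (1/3)P₂∂_{v₂}z − F₂∂_{v₁}z + (∂_{v₁}F₂ − (1/3)∂_{v₂}P₂ − (2/9)P₂² − (2/3)F₂P₁)z = 0. Then w := z/g satisfies: ∂_{v₁v₁}w + (α/v₁ + β/(v₁−1) − γ/(v₁−v₂))∂_{v₁}w + (γv₂(v₂−1)/(v₁(v₁−1)(v₁−v₂)))∂_{v₂}w + ((1−α−β)γ/(v₁(v₁−1)))w = 0; ∂_{v₂v₂}w + (α/v₂ + β/(v₂−1) − γ/(v₂−v₁))∂_{v₂}w + (γv₁(v₁−1)/(v₂(v₂−1)(v₂−v₁)))∂_{v₁}w + ((1−α−β)γ/(v₂(v₂−1)))w = 0; ∂_{v₁v₂}w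 = (−γ/(v₁−v₂))∂_{v₁}w + (γ/(v₁−v₂))∂_{v₂}w. -/
open Complex Matrix

noncomputable section

/-- The coefficient `P₁(α,β,γ;v₁,v₂)`. -/
def P1 (α β γ : ℂ) (p : ℂ × ℂ) : ℂ := α / p.1 + β / (p.1 - 1) + γ / (p.1 - p.2)

/-- The coefficient `P₂(α,β,γ;v₁,v₂)`. -/
def P2 (α β γ : ℂ) (p : ℂ × ℂ) : ℂ := α / p.2 + β / (p.2 - 1) + γ / (p.2 - p.1)

/-- The coefficient `F₁(γ;v₁,v₂)`. -/
def F1 (γ : ℂ) (p : ℂ × ℂ) : ℂ :=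
  -γ * p.2 * (p.2 - 1) / (p.1 * (p.1 - 1) * (p.1 - p.2))

/-- The coefficient `F₂(γ;v₁,v₂)`. -/
def F2 (γ : ℂ) (p : ℂ × ℂ) : ℂ :=
  -γ * p.1 * (p.1 - 1) / (p.2 * (p.2 - 1) * (p.2 - p.1))

open Metric Filter Topology in
/-- The second partial derivative of a holomorphic function of two variables is holomorphic in the
first variable. -/
theorem differentiableAt_pdy_fst {Ω : Set (ℂ × ℂ)} (hΩ : IsOpen Ω) {f : ℂ × ℂ → ℂ}
    (hf : DifferentiableOn ℂ f Ω) {p : ℂ × ℂ} (hp : p ∈ Ω) :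
    DifferentiableAt ℂ (fun x => pdy f (x, p.2)) p.1 := by
  obtain ⟨r, hr, hball⟩ := nhds_basis_closedBall.mem_iff.mp (hΩ.mem_nhds hp)
  obtain ⟨M, hM⟩ := (isCompact_closedBall p r).exists_bound_of_continuousOn
    (hf.continuousOn.mono hball)
  have hmem : ∀ x ∈ ball p.1 r, ∀ y ∈ ball p.2 r, (x, y) ∈ closedBall p r := fun x hx y hy =>
    ball_subset_closedBall (by
      rw [← ball_prod_same]
      exact ⟨hx, hy⟩)
  have hdiffy : ∀ x ∈ ball p.1 r, DifferentiableOn ℂ (fun y => f (x, y)) (ball p.2 r) :=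
    fun x hx => hf.comp (by fun_prop) fun y hy => hball (hmem x hx y hy)
  have hdiffx : ∀ y ∈ ball p.2 r, DifferentiableOn ℂ (fun x => f (x, y)) (ball p.1 r) :=
    fun y hy => hf.comp (by fun_prop) fun x hx => hball (hmem x hx y hy)
  have hM0 : 0 ≤ M := (norm_nonneg _).trans (hM p (mem_closedBall_self hr.le))
  set C : ℝ := (2 * M + 1) / r with hC
  have hC0 : 0 < C := by positivity
  have hcenter : p.2 ∈ ball p.2 r := mem_ball_self hr
  have hslope : ∀ x ∈ ball p.1 r, ∀ y ∈ ball p.2 r,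
      ‖dslope (fun y => f (x, y)) p.2 y‖ ≤ C := by
    intro x hx y hy
    refine Complex.norm_dslope_le_div_of_mapsTo_ball (hdiffy x hx) (fun t ht => ?_) hy
    rw [mem_closedBall, dist_eq_norm]
    have h₁ := hM _ (hmem x hx t ht)
    have h₂ := hM _ (hmem x hx p.2 hcenter)
    exact (norm_sub_le _ _).trans (by linarith)
  have hlip : ∀ x ∈ ball p.1 r, ∀ y ∈ ball p.2 r,
      dist (dslope (fun y => f (x, y)) p.2 y) (pdy f (x, p.2)) ≤ 2 * C / r * dist y p.2 := by
    intro x hx y hy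
    have hd : DifferentiableOn ℂ (dslope (fun y => f (x, y)) p.2) (ball p.2 r) :=
      (Complex.differentiableOn_dslope (ball_mem_nhds _ hr)).mpr (hdiffy x hx)
    have key := Complex.dist_le_div_mul_dist_of_mapsTo_ball (R₂ := 2 * C) hd (fun t ht => ?_) hy
    · rwa [dslope_same] at key
    · rw [mem_closedBall, dist_eq_norm]
      have h₁ := hslope x hx t ht
      have h₂ := hslope x hx p.2 hcenter
      exact (norm_sub_le _ _).trans (by linarith)
  have hlim : TendstoUniformlyOn (fun y x => dslope (fun y => f (x, y)) p.2 y)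
      (fun x => pdy f (x, p.2)) (𝓝[≠] p.2) (ball p.1 r) := by
    rw [Metric.tendstoUniformlyOn_iff]
    intro ε hε
    have ht : Tendsto (fun y => 2 * C / r * dist y p.2) (𝓝[≠] p.2) (𝓝 0) := by
      have : Continuous fun y => 2 * C / r * dist y p.2 := by fun_prop
      simpa using (this.tendsto p.2).mono_left nhdsWithin_le_nhds
    filter_upwards [ht.eventually (gt_mem_nhds hε),
      nhdsWithin_le_nhds (ball_mem_nhds p.2 hr)] with y hy hyr x hx
    rw [dist_comm]
    exact (hlip x hx y hyr).trans_lt hy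
  refine (hlim.tendstoLocallyUniformlyOn.differentiableOn ?_ isOpen_ball).differentiableAt
    (ball_mem_nhds _ hr)
  filter_upwards [self_mem_nhdsWithin, nhdsWithin_le_nhds (ball_mem_nhds p.2 hr)] with y hy hyr
  have hEq : (fun x => dslope (fun y => f (x, y)) p.2 y) =
      fun x => (y - p.2)⁻¹ • (f (x, y) - f (x, p.2)) := by
    funext x
    rw [dslope_of_ne _ hy, slope_def_module]
  rw [hEq]
  exact ((hdiffx y hyr).sub (hdiffx p.2 hcenter)).const_smul (y - p.2)⁻¹

/-- The second derivative of a product `g * w` in terms of the logarithmic derivative `a` of `g`. -/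
theorem deriv_deriv_eq_of_logDeriv {U : Set ℂ} (hU : IsOpen U) {f g w a : ℂ → ℂ} {a' t : ℂ}
    (hg : ∀ s ∈ U, HasDerivAt g (a s * g s) s) (hw : DifferentiableOn ℂ w U)
    (hf : ∀ s ∈ U, f s = g s * w s) (ht : t ∈ U) (ha : HasDerivAt a a' t) :
    deriv (deriv f) t =
      g t * (deriv (deriv w) t + 2 * a t * deriv w t + (a' + a t ^ 2) * w t) := by
  have hw1 : ∀ s ∈ U, HasDerivAt w (deriv w s) s := fun s hs =>
    (hw.differentiableAt (hU.mem_nhds hs)).hasDerivAt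
  have hw2 : HasDerivAt (deriv w) (deriv (deriv w) t) t :=
    ((hw.deriv hU).differentiableAt (hU.mem_nhds ht)).hasDerivAt
  have h1 : ∀ s ∈ U, deriv f s = a s * g s * w s + g s * deriv w s := fun s hs => by
    have he : f =ᶠ[nhds s] fun s => g s * w s := by
      filter_upwards [hU.mem_nhds hs] with q hq using hf q hq
    rw [he.deriv_eq]
    exact ((hg s hs).mul (hw1 s hs)).deriv
  have he : deriv f =ᶠ[nhds t] fun s => a s * g s * w s + g s * deriv w s := by
    filter_upwards [hU.mem_nhds ht] with q hq using h1 q hq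
  rw [he.deriv_eq]
  refine ((((ha.mul (hg t ht)).mul (hw1 t ht)).add ((hg t ht).mul hw2)).deriv).trans ?_
  simp only [Pi.mul_apply]
  ring

theorem hasDerivAt_const_div_sub (c d t : ℂ) (h : t ≠ d) :
    HasDerivAt (fun x => c / (x - d)) (-c / (t - d) ^ 2) t :=
  ((hasDerivAt_const t c).fun_div ((hasDerivAt_id t).sub_const d)
    (sub_ne_zero.mpr h)).congr_deriv (by simp)

theorem hasDerivAt_const_div_const_sub (c d t : ℂ) (h : t ≠ d) :
    HasDerivAt (fun x => c / (d - x)) (c / (d - t) ^ 2) t :=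
  ((hasDerivAt_const t c).fun_div ((hasDerivAt_id t).const_sub d)
    (sub_ne_zero.mpr h.symm)).congr_deriv (by simp)

theorem hasDerivAt_pole_sum (a b c y t : ℂ) (h0 : t ≠ 0) (h1 : t ≠ 1) (hy : t ≠ y) :
    HasDerivAt (fun x => a / x + b / (x - 1) + c / (x - y))
      (-a / t ^ 2 + -b / (t - 1) ^ 2 + -c / (t - y) ^ 2) t := by
  have h := hasDerivAt_const_div_sub a 0 t h0
  simp only [sub_zero] at h
  exact (h.add (hasDerivAt_const_div_sub b 1 t h1)).add (hasDerivAt_const_div_sub c y t hy)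

theorem hasDerivAt_quadratic_div_sub (γ x y : ℂ) (hx : x ≠ 0) (hx1 : x ≠ 1) (hxy : x ≠ y) :
    HasDerivAt (fun y => -γ * y * (y - 1) / (x * (x - 1) * (x - y)))
      (-γ / (x * (x - 1)) * ((2 * y - 1) / (x - y) + y * (y - 1) / (x - y) ^ 2)) y := by
  have hx1' := sub_ne_zero.mpr hx1
  have hxy' := sub_ne_zero.mpr hxy
  have hn := ((hasDerivAt_id y).const_mul (-γ)).fun_mul ((hasDerivAt_id y).sub_const 1)
  have hd := ((hasDerivAt_id y).const_sub x).const_mul (x * (x - 1))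
  refine (hn.fun_div hd (mul_ne_zero (mul_ne_zero hx hx1') hxy')).congr_deriv ?_
  simp only [id]
  field_simp
  ring

/-- **Main Theorem 2, transformation part.** Dividing a solution `z` of
the linear system by the multivalued factor
`g = v₁^{α/3}v₂^{α/3}(v₁−1)^{β/3}(v₂−1)^{β/3}(v₁−v₂)^{−2γ/3}`
(characterized by its logarithmic derivatives) yields a solution `w = z/g` of the
Appell-type hypergeometric system. Here `pdx`/`pdy` denote `∂_{v₁}`/`∂_{v₂}`. -/
theorem statement11 (α β γ : ℂ) (Ω : Set (ℂ × ℂ)) (hΩ : IsOpen Ω)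
    (hΩgood : ∀ p ∈ Ω, p.1 ≠ 0 ∧ p.1 ≠ 1 ∧ p.2 ≠ 0 ∧ p.2 ≠ 1 ∧ p.1 ≠ p.2)
    (g : ℂ × ℂ → ℂ) (hg : DifferentiableOn ℂ g Ω) (hg0 : ∀ p ∈ Ω, g p ≠ 0)
    (hgx : ∀ p ∈ Ω, pdx g p =
      (α / (3 * p.1) + β / (3 * (p.1 - 1)) - 2 * γ / (3 * (p.1 - p.2))) * g p)
    (hgy : ∀ p ∈ Ω, pdy g p =
      (α / (3 * p.2) + β / (3 * (p.2 - 1)) - 2 * γ / (3 * (p.2 - p.1))) * g p)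
    (z : ℂ × ℂ → ℂ) (hz : DifferentiableOn ℂ z Ω)
    (heq₁ : ∀ p ∈ Ω,
      pdx (pdx z) p + (1/3) * P1 α β γ p * pdx z p - F1 γ p * pdy z p
        + (pdy (F1 γ) p - (1/3) * pdx (P1 α β γ) p - (2/9) * P1 α β γ p ^ 2
            - (2/3) * F1 γ p * P2 α β γ p) * z p = 0)
    (heq₂ : ∀ p ∈ Ω,
      pdx (pdy z) p - (1/3) * P2 α β γ p * pdx z p - (1/3) * P1 α β γ p * pdy z p
        + ((1/3) * pdx (P2 α β γ) p + (1/3) * pdy (P1 α β γ) p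
            + (1/9) * P1 α β γ p * P2 α β γ p - F1 γ p * F2 γ p) * z p = 0)
    (heq₃ : ∀ p ∈ Ω,
      pdy (pdy z) p + (1/3) * P2 α β γ p * pdy z p - F2 γ p * pdx z p
        + (pdx (F2 γ) p - (1/3) * pdy (P2 α β γ) p - (2/9) * P2 α β γ p ^ 2
            - (2/3) * F2 γ p * P1 α β γ p) * z p = 0)
    (w : ℂ × ℂ → ℂ) (hw : w = fun q => z q / g q) :
    ∀ p ∈ Ω,
      (pdx (pdx w) p
        + (α / p.1 + β / (p.1 - 1) - γ / (p.1 - p.2)) * pdx w p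
        + (γ * p.2 * (p.2 - 1) / (p.1 * (p.1 - 1) * (p.1 - p.2))) * pdy w p
        + ((1 - α - β) * γ / (p.1 * (p.1 - 1))) * w p = 0) ∧
      (pdy (pdy w) p
        + (α / p.2 + β / (p.2 - 1) - γ / (p.2 - p.1)) * pdy w p
        + (γ * p.1 * (p.1 - 1) / (p.2 * (p.2 - 1) * (p.2 - p.1))) * pdx w p
        + ((1 - α - β) * γ / (p.2 * (p.2 - 1))) * w p = 0) ∧
      (pdx (pdy w) p =
        (-γ / (p.1 - p.2)) * pdx w p + (γ / (p.1 - p.2)) * pdy w p) := by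
  subst hw
  replace hgx : ∀ p ∈ Ω, pdx g p =
      (α / 3 / p.1 + β / 3 / (p.1 - 1) + (-2 * γ / 3) / (p.1 - p.2)) * g p := fun p hp => by
    rw [hgx p hp]
    simp only [div_mul_eq_div_div]
    ring
  replace hgy : ∀ p ∈ Ω, pdy g p =
      (α / 3 / p.2 + β / 3 / (p.2 - 1) + (-2 * γ / 3) / (p.2 - p.1)) * g p := fun p hp => by
    rw [hgy p hp]
    simp only [div_mul_eq_div_div]
    ring
  set w : ℂ × ℂ → ℂ := fun q => z q / g q with hwdef
  have hwd : DifferentiableOn ℂ w Ω := by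
    simp only [hwdef, div_eq_mul_inv]
    exact hz.mul (hg.fun_inv hg0)
  have hzw : ∀ q ∈ Ω, z q = g q * w q := fun q hq => by
    rw [hwdef]
    field_simp [hg0 q hq]
  have hgX : ∀ q ∈ Ω, HasDerivAt (fun x => g (x, q.2)) (pdx g q) q.1 := fun q hq =>
    ((hg.differentiableAt (hΩ.mem_nhds hq)).comp q.1
      (f := fun x => (x, q.2)) (by fun_prop)).hasDerivAt
  have hgY : ∀ q ∈ Ω, HasDerivAt (fun y => g (q.1, y)) (pdy g q) q.2 := fun q hq =>
    ((hg.differentiableAt (hΩ.mem_nhds hq)).comp q.2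
      (f := fun y => (q.1, y)) (by fun_prop)).hasDerivAt
  have hwX : ∀ q ∈ Ω, HasDerivAt (fun x => w (x, q.2)) (pdx w q) q.1 := fun q hq =>
    ((hwd.differentiableAt (hΩ.mem_nhds hq)).comp q.1
      (f := fun x => (x, q.2)) (by fun_prop)).hasDerivAt
  have hwY : ∀ q ∈ Ω, HasDerivAt (fun y => w (q.1, y)) (pdy w q) q.2 := fun q hq =>
    ((hwd.differentiableAt (hΩ.mem_nhds hq)).comp q.2
      (f := fun y => (q.1, y)) (by fun_prop)).hasDerivAt
  intro p hp
  obtain ⟨x, y⟩ := p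
  have hUx : IsOpen {s : ℂ | (s, y) ∈ Ω} := hΩ.preimage (by fun_prop)
  have hUy : IsOpen {s : ℂ | (x, s) ∈ Ω} := hΩ.preimage (by fun_prop)
  have hgood := hΩgood _ hp
  simp only at hgood
  obtain ⟨hx0, hx1, hy0, hy1, hxy⟩ := hgood
  have hzx : ∀ q ∈ Ω, pdx z q = pdx g q * w q + g q * pdx w q := fun q hq => by
    have he : (fun s => z (s, q.2)) =ᶠ[nhds q.1] fun s => g (s, q.2) * w (s, q.2) := by
      have hV : IsOpen {s : ℂ | (s, q.2) ∈ Ω} := hΩ.preimage (by fun_prop)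
      filter_upwards [hV.mem_nhds hq] with s hs using hzw _ hs
    exact he.deriv_eq.trans ((hgX q hq).mul (hwX q hq)).deriv
  have hzy : ∀ q ∈ Ω, pdy z q = pdy g q * w q + g q * pdy w q := fun q hq => by
    have he : (fun s => z (q.1, s)) =ᶠ[nhds q.2] fun s => g (q.1, s) * w (q.1, s) := by
      have hV : IsOpen {s : ℂ | (q.1, s) ∈ Ω} := hΩ.preimage (by fun_prop)
      filter_upwards [hV.mem_nhds hq] with s hs using hzw _ hs
    exact he.deriv_eq.trans ((hgY q hq).mul (hwY q hq)).deriv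
  have hax := hasDerivAt_pole_sum (α / 3) (β / 3) (-2 * γ / 3) y x hx0 hx1 hxy
  have hay := hasDerivAt_pole_sum (α / 3) (β / 3) (-2 * γ / 3) x y hy0 hy1 hxy.symm
  have hzxx : pdx (pdx z) (x, y) = _ :=
    deriv_deriv_eq_of_logDeriv (f := fun s => z (s, y)) (g := fun s => g (s, y))
      (w := fun s => w (s, y)) hUx
      (fun s hs => (hgX (s, y) hs).congr_deriv (hgx _ hs))
      (hwd.comp (by fun_prop) fun s hs => hs) (fun s hs => hzw _ hs) hp hax
  have hzyy : pdy (pdy z) (x, y) = _ :=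
    deriv_deriv_eq_of_logDeriv (f := fun s => z (x, s)) (g := fun s => g (x, s))
      (w := fun s => w (x, s)) hUy
      (fun s hs => (hgY (x, s) hs).congr_deriv (hgy _ hs))
      (hwd.comp (by fun_prop) fun s hs => hs) (fun s hs => hzw _ hs) hp hay
  change _ = g (x, y) * (pdx (pdx w) (x, y) + 2 * _ * pdx w (x, y) + _ * w (x, y)) at hzxx
  change _ = g (x, y) * (pdy (pdy w) (x, y) + 2 * _ * pdy w (x, y) + _ * w (x, y)) at hzyy
  have hb : HasDerivAt
      (fun s => α / 3 / y + β / 3 / (y - 1) + (-2 * γ / 3) / (y - s))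
      ((-2 * γ / 3) / (y - x) ^ 2) x :=
    (hasDerivAt_const_div_const_sub (-2 * γ / 3) y x hxy).const_add _
  have hzxy : pdx (pdy z) (x, y) = g (x, y) * (pdx (pdy w) (x, y)
      + (α / 3 / y + β / 3 / (y - 1) + (-2 * γ / 3) / (y - x)) * pdx w (x, y)
      + (α / 3 / x + β / 3 / (x - 1) + (-2 * γ / 3) / (x - y)) * pdy w (x, y)
      + ((-2 * γ / 3) / (y - x) ^ 2
        + (α / 3 / x + β / 3 / (x - 1) + (-2 * γ / 3) / (x - y))
          * (α / 3 / y + β / 3 / (y - 1) + (-2 * γ / 3) / (y - x))) * w (x, y)) := by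
    have he : (fun s => pdy z (s, y)) =ᶠ[nhds x] fun s =>
        (α / 3 / y + β / 3 / (y - 1) + (-2 * γ / 3) / (y - s)) * g (s, y) * w (s, y)
          + g (s, y) * pdy w (s, y) := by
      filter_upwards [hUx.mem_nhds hp] with s hs
      rw [hzy _ hs, hgy _ hs]
    have hwyx : HasDerivAt (fun s => pdy w (s, y)) (pdx (pdy w) (x, y)) x :=
      (differentiableAt_pdy_fst hΩ hwd hp).hasDerivAt
    refine (he.deriv_eq.trans ((((hb.mul (hgX _ hp)).mul (hwX _ hp)).add
      ((hgX _ hp).mul hwyx)).deriv)).trans ?_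
    simp only [Pi.mul_apply]
    rw [hgx _ hp]
    ring
  have hP1x : pdx (P1 α β γ) (x, y) = _ := (hasDerivAt_pole_sum α β γ y x hx0 hx1 hxy).deriv
  have hP2y : pdy (P2 α β γ) (x, y) = _ := (hasDerivAt_pole_sum α β γ x y hy0 hy1 hxy.symm).deriv
  have hP2x : pdx (P2 α β γ) (x, y) = γ / (y - x) ^ 2 :=
    ((hasDerivAt_const_div_const_sub γ y x hxy).const_add (α / y + β / (y - 1))).deriv
  have hP1y : pdy (P1 α β γ) (x, y) = γ / (x - y) ^ 2 :=
    ((hasDerivAt_const_div_const_sub γ x y hxy.symm).const_add (α / x + β / (x - 1))).deriv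
  have hF1y : pdy (F1 γ) (x, y) = _ := (hasDerivAt_quadratic_div_sub γ x y hx0 hx1 hxy).deriv
  have hF2x : pdx (F2 γ) (x, y) = _ := (hasDerivAt_quadratic_div_sub γ y x hy0 hy1 hxy.symm).deriv
  have e1 := heq₁ _ hp
  have e2 := heq₂ _ hp
  have e3 := heq₃ _ hp
  have hg0p := hg0 _ hp
  rw [hzxx, hzx _ hp, hzy _ hp, hgx _ hp, hgy _ hp, hzw _ hp, hF1y, hP1x] at e1
  rw [hzxy, hzx _ hp, hzy _ hp, hgx _ hp, hgy _ hp, hzw _ hp, hP1y, hP2x] at e2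
  rw [hzyy, hzx _ hp, hzy _ hp, hgx _ hp, hgy _ hp, hzw _ hp, hF2x, hP2y] at e3
  simp only [P1, P2, F1, F2] at e1 e2 e3 ⊢
  generalize pdx (pdx w) (x, y) = wxx at *
  generalize pdx (pdy w) (x, y) = wxy at *
  generalize pdy (pdy w) (x, y) = wyy at *
  generalize pdx w (x, y) = wx at *
  generalize pdy w (x, y) = wy at *
  generalize w (x, y) = w0 at *
  generalize g (x, y) = g0 at *
  clear_value w
  have hx1' := sub_ne_zero.mpr hx1
  have hy1' := sub_ne_zero.mpr hy1
  have hxy' := sub_ne_zero.mpr hxy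
  have hyx : y - x = -(x - y) := by ring
  rw [hyx] at *
  refine ⟨mul_left_cancel₀ hg0p (.trans ?_ (e1.trans (mul_zero g0).symm)),
    mul_left_cancel₀ hg0p (.trans ?_ (e3.trans (mul_zero g0).symm)),
    sub_eq_zero.mp (mul_left_cancel₀ hg0p (.trans ?_ (e2.trans (mul_zero g0).symm)))⟩
  all_goals
    field_simp
    ring
end
end

section
/- (Main Proposition 3, part (2).) Fix α,β,γ ∈ ℂ, and define F₁(γ;v₁,v₂) := −γv₂(v₂−1)/(v₁(v₁−1)(v₁−v₂)), F₂(γ;v₁,v₂) := −γv₁(v₁−1)/(v₂(v₂−1)(v₂−v₁)), P₁(α,β,γ;v₁,v₂) := α/v₁ + β/(v₁−1) + γ/(v₁−v₂), P₂(α,β,γ;v₁,v₂) := α/v₂ + β/(v₂−1) + γ/(v₂−v₁). Let S₁(v₁,v₂) := (v₁/v₂, 1/v₂) and S₂(v₁,v₂) := (1/v₁, v₂/v₁). Let s₁,s₂ be holomorphic on an open set D of points (v₁,v₂) with v₁,v₂ ∉ {0,1}, v₁ ≠ v₂, with J(s₁,s₂) ≠ 0, satisfying the system {s₁,s₂;v₁,v₂}_{v₁}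 = F₁(γ;v₁,v₂), {s₁,s₂;v₁,v₂}_{v₂} = F₂(γ;v₁,v₂), [s₁,s₂;v₁,v₂]_{v₁} = P₁(α,β,γ;v₁,v₂), [s₁,s₂;v₁,v₂]_{v₂} = P₂(α,β,γ;v₁,v₂) on D. Then at every point (v₁,v₂) with v₁,v₂ ∉ {0,1} and v₁ ≠ v₂: if S₁(v₁,v₂) ∈ D then the pair (s₁∘S₁, s₂∘S₁) satisfies {s₁∘S₁, s₂∘S₁; v₁,v₂}_{v₁} = F₁(γ;v₁,v₂) and [s₁∘S₁, s₂∘S₁; v₁,v₂]_{v₁} = P₁(α, −2γ, β+3γ; v₁,v₂); and if S₂(v₁,v₂) ∈ D then the pair (s₁∘S₂, s₂∘S₂) satisfies {s₁∘S₂, s₂∘S₂; v₁,v₂}_{v₂} = F₂(γ;v₁,v₂) and [s₁∘S₂, s₂∘S₂; v₁,v₂]_{v₂} = P₂(α, −2γ, β+3γ; v₁,v₂). -/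
open Complex Matrix

noncomputable section

/-- The map `S₁(v₁,v₂) = (v₁/v₂, 1/v₂)`. -/
def S1map (p : ℂ × ℂ) : ℂ × ℂ := (p.1 / p.2, 1 / p.2)

/-- The map `S₂(v₁,v₂) = (1/v₁, v₂/v₁)`. -/
def S2map (p : ℂ × ℂ) : ℂ × ℂ := (1 / p.1, p.2 / p.1)

open Metric Set Filter Topology MeasureTheory

/-- Directional derivatives of a holomorphic function of two variables are holomorphic. -/
theorem differentiableAt_fderiv_apply {f : ℂ × ℂ → ℂ} {U : Set (ℂ × ℂ)} (hU : IsOpen U)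
    (hf : DifferentiableOn ℂ f U) {v : ℂ × ℂ} (hv : ‖v‖ ≤ 1) {q₀ : ℂ × ℂ} (hq₀ : q₀ ∈ U) :
    DifferentiableAt ℂ (fun q => fderiv ℂ f q v) q₀ := by
  obtain ⟨ρ, hρ, hball⟩ : ∃ ρ > 0, ∀ q ∈ ball q₀ ρ, q ∈ U ∧ dist (f q) (f q₀) < 1 := by
    have hc := (hf.continuousOn.continuousAt (hU.mem_nhds hq₀)).eventually
      (ball_mem_nhds (f q₀) one_pos)
    exact Metric.eventually_nhds_iff_ball.1 (Eventually.and (hU.mem_nhds hq₀) hc)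
  obtain ⟨r, hr, rfl⟩ : ∃ r > 0, ρ = 2 * r := ⟨ρ / 2, by positivity, by ring⟩
  have hfd : ∀ q ∈ ball q₀ (2 * r), DifferentiableAt ℂ f q := fun q hq =>
    hf.differentiableAt (hU.mem_nhds (hball q hq).1)
  have hmem : ∀ q ∈ ball q₀ r, ∀ t : ℂ, ‖t‖ ≤ r → q + t • v ∈ ball q₀ (2 * r) := by
    intro q hq t ht
    rw [mem_ball_iff_norm] at hq ⊢
    have : ‖t • v‖ ≤ r := by
      rw [norm_smul]
      calc ‖t‖ * ‖v‖ ≤ r * 1 := by gcongr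
        _ = r := mul_one r
    calc ‖q + t • v - q₀‖ = ‖(q - q₀) + t • v‖ := by congr 1; abel
      _ ≤ ‖q - q₀‖ + ‖t • v‖ := norm_add_le _ _
      _ < 2 * r := by linarith
  have hline : ∀ q ∈ ball q₀ r, ∀ t : ℂ, ‖t‖ ≤ r →
      HasDerivAt (fun t : ℂ => f (q + t • v)) (fderiv ℂ f (q + t • v) v) t := by
    intro q hq t ht
    have h1 : HasDerivAt (fun t : ℂ => q + t • v) v t := by
      simpa using ((hasDerivAt_id t).smul_const v).const_add q
    exact (hfd _ (hmem q hq t ht)).hasFDerivAt.comp_hasDerivAt t h1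
  have hnorm : ∀ θ : ℝ, ‖circleMap 0 r θ‖ = r := fun θ => by
    simp [abs_of_pos hr]
  set w : ℝ → ℂ := fun θ => deriv (circleMap 0 r) θ * (circleMap 0 r θ ^ 2)⁻¹ with hw
  have hwc : Continuous w := by
    have hne : ∀ θ, circleMap 0 r θ ^ 2 ≠ 0 := fun θ =>
      pow_ne_zero _ (circleMap_ne_center hr.ne')
    simp only [hw, deriv_circleMap]
    exact ((continuous_circleMap 0 r).mul continuous_const).mul
      (((continuous_circleMap 0 r).pow 2).inv₀ hne)
  have hcauchy : ∀ q ∈ ball q₀ r, fderiv ℂ f q v =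
      (2 * Real.pi * I : ℂ)⁻¹ *
        ∫ θ in (0 : ℝ)..(2 * Real.pi), w θ * f (q + circleMap 0 r θ • v) := by
    intro q hq
    have h0 := (hline q hq 0 (by simpa using hr.le)).deriv
    have hd : DiffContOnCl ℂ (fun t : ℂ => f (q + t • v)) (ball 0 r) := by
      refine DifferentiableOn.diffContOnCl fun t ht => ?_
      rw [closure_ball _ hr.ne', mem_closedBall_zero_iff] at ht
      exact (hline q hq t ht).differentiableAt.differentiableWithinAt
    have hD := hd.deriv_eq_smul_circleIntegral hr
    rw [h0] at hD
    simp only [zero_smul, add_zero] at hD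
    rw [circleIntegral, smul_eq_mul] at hD
    rw [eq_inv_mul_iff_mul_eq₀ two_pi_I_ne_zero, ← hD]
    refine intervalIntegral.integral_congr fun θ _ => ?_
    simp only [hw, smul_eq_mul, sub_zero]
    ring
  have hcont : ∀ q ∈ ball q₀ r, Continuous fun θ : ℝ => w θ * f (q + circleMap 0 r θ • v) := by
    intro q hq
    refine hwc.mul (continuous_iff_continuousAt.2 fun θ => ?_)
    have h1 := (hline q hq (circleMap 0 r θ) (hnorm θ).le).continuousAt
    exact ContinuousAt.comp (f := circleMap 0 r) (g := fun t : ℂ => f (q + t • v)) h1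
      (continuous_circleMap 0 r).continuousAt
  have hq₀r : q₀ ∈ ball q₀ r := mem_ball_self hr
  have hint := (hasFDerivAt_integral_of_dominated_loc_of_lip'
    (μ := volume.restrict (Ioc 0 (2 * Real.pi))) (𝕜 := ℂ)
    (F := fun q θ => w θ * f (q + circleMap 0 r θ • v))
    (F' := fun θ => w θ • fderiv ℂ f (q₀ + circleMap 0 r θ • v))
    (bound := fun θ => ‖w θ‖ * (2 / r)) (ball_mem_nhds q₀ hr)
    (fun q hq => (hcont q hq).aestronglyMeasurable)
    ((hcont q₀ hq₀r).integrableOn_Ioc)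
    (by
      have hc : Continuous fun θ : ℝ => q₀ + circleMap 0 r θ • v :=
        continuous_const.add ((continuous_circleMap 0 r).smul continuous_const)
      exact hwc.aestronglyMeasurable.smul
        ((measurable_fderiv ℂ f).comp hc.measurable).aestronglyMeasurable)
    (by
      refine Eventually.of_forall fun θ q hq => ?_
      have hcm := hmem q₀ hq₀r (circleMap 0 r θ) (hnorm θ).le
      have hsub : ∀ z ∈ ball (q₀ + circleMap 0 r θ • v) r, z ∈ ball q₀ (2 * r) := by
        intro z hz
        have hz' : q₀ + (z - (q₀ + circleMap 0 r θ • v)) ∈ ball q₀ r := by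
          rw [mem_ball_iff_norm] at hz ⊢
          simpa using hz
        have := hmem _ hz' (circleMap 0 r θ) (hnorm θ).le
        convert this using 1
        abel
      have hq' : q + circleMap 0 r θ • v ∈ ball (q₀ + circleMap 0 r θ • v) r := by
        simpa [mem_ball_iff_norm] using hq
      have hlip := Complex.dist_le_div_mul_dist_of_mapsTo_ball (R₂ := 2)
        (f := f) (c := q₀ + circleMap 0 r θ • v) (R₁ := r)
        (fun z hz => (hfd z (hsub z hz)).differentiableWithinAt)
        (fun z hz => by
          have h1 := (hball z (hsub z hz)).2
          have h2 := (hball _ hcm).2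
          rw [dist_comm] at h2
          exact ball_subset_closedBall ((dist_triangle _ (f q₀) _).trans_lt (by linarith)))
        hq'
      rw [dist_eq_norm, dist_eq_norm] at hlip
      rw [← mul_sub, norm_mul, mul_assoc]
      gcongr
      simpa using hlip)
    ((hwc.norm.mul continuous_const).integrableOn_Ioc)
    (by
      refine Eventually.of_forall fun θ => ?_
      have h1 := (hfd _ (hmem q₀ hq₀r (circleMap 0 r θ) (hnorm θ).le)).hasFDerivAt
      have h2 : HasFDerivAt (fun q => f (q + circleMap 0 r θ • v))
          (fderiv ℂ f (q₀ + circleMap 0 r θ • v)) q₀ := 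
        HasFDerivAt.comp q₀ (f := fun q => q + circleMap 0 r θ • v) h1
          ((hasFDerivAt_id q₀).add_const (circleMap 0 r θ • v))
      exact h2.const_mul (w θ))).2
  have hdiff := hint.differentiableAt.const_mul (2 * Real.pi * I : ℂ)⁻¹
  refine hdiff.congr_of_eventuallyEq ?_
  filter_upwards [ball_mem_nhds q₀ hr] with q hq
  rw [hcauchy q hq, intervalIntegral.integral_of_le (by positivity)]

theorem pdx_eq_fderiv {f : ℂ × ℂ → ℂ} {q : ℂ × ℂ} (hf : DifferentiableAt ℂ f q) :
    pdx f q = fderiv ℂ f q (1, 0) :=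
  (hf.hasFDerivAt.comp_hasDerivAt q.1
    ((hasDerivAt_id q.1).prodMk (hasDerivAt_const q.1 q.2))).deriv

theorem pdy_eq_fderiv {f : ℂ × ℂ → ℂ} {q : ℂ × ℂ} (hf : DifferentiableAt ℂ f q) :
    pdy f q = fderiv ℂ f q (0, 1) :=
  (hf.hasFDerivAt.comp_hasDerivAt q.2
    ((hasDerivAt_const q.2 q.1).prodMk (hasDerivAt_id q.2))).deriv

theorem differentiableAt_pdx {f : ℂ × ℂ → ℂ} {U : Set (ℂ × ℂ)} (hU : IsOpen U)
    (hf : DifferentiableOn ℂ f U) {q : ℂ × ℂ} (hq : q ∈ U) : DifferentiableAt ℂ (pdx f) q := by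
  refine (differentiableAt_fderiv_apply hU hf (v := (1, 0)) (by simp) hq).congr_of_eventuallyEq ?_
  filter_upwards [hU.mem_nhds hq] with z hz
  exact pdx_eq_fderiv (hf.differentiableAt (hU.mem_nhds hz))

theorem differentiableAt_pdy {f : ℂ × ℂ → ℂ} {U : Set (ℂ × ℂ)} (hU : IsOpen U)
    (hf : DifferentiableOn ℂ f U) {q : ℂ × ℂ} (hq : q ∈ U) : DifferentiableAt ℂ (pdy f) q := by
  refine (differentiableAt_fderiv_apply hU hf (v := (0, 1)) (by simp) hq).congr_of_eventuallyEq ?_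
  filter_upwards [hU.mem_nhds hq] with z hz
  exact pdy_eq_fderiv (hf.differentiableAt (hU.mem_nhds hz))

/-- Chain rule along a curve, in terms of partial derivatives. -/
theorem hasDerivAt_comp_curve {f : ℂ × ℂ → ℂ} {a b : ℂ → ℂ} {a' b' t : ℂ}
    (hf : DifferentiableAt ℂ f (a t, b t)) (ha : HasDerivAt a a' t) (hb : HasDerivAt b b' t) :
    HasDerivAt (fun t => f (a t, b t))
      (pdx f (a t, b t) * a' + pdy f (a t, b t) * b') t := by
  refine (hf.hasFDerivAt.comp_hasDerivAt t (ha.prodMk hb)).congr_deriv ?_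
  have h : ((a', b') : ℂ × ℂ) = a' • (1, 0) + b' • (0, 1) := by simp
  rw [pdx_eq_fderiv hf, pdy_eq_fderiv hf, h, map_add, map_smul, map_smul]
  simp only [smul_eq_mul]
  ring

theorem hasDerivAt_const_div {c t : ℂ} (ht : t ≠ 0) :
    HasDerivAt (fun t : ℂ => c / t) (-c / t ^ 2) t := by
  simpa [div_eq_mul_inv] using (hasDerivAt_inv ht).const_mul c

section Partials

variable {f : ℂ × ℂ → ℂ} {D : Set (ℂ × ℂ)}

theorem pdx_comp_S1map {x y : ℂ} (hf : DifferentiableAt ℂ f (x / y, 1 / y)) :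
    pdx (fun q => f (S1map q)) (x, y) = pdx f (x / y, 1 / y) / y := by
  have h := (hasDerivAt_comp_curve (a := fun x => x / y) (b := fun _ => 1 / y) hf
    ((hasDerivAt_id x).div_const y) (hasDerivAt_const x _)).deriv
  simp only [pdx, S1map] at h ⊢
  rw [h]
  ring

theorem pdy_comp_S1map {x y : ℂ} (hy : y ≠ 0) (hf : DifferentiableAt ℂ f (x / y, 1 / y)) :
    pdy (fun q => f (S1map q)) (x, y) =
      -(x * pdx f (x / y, 1 / y) + pdy f (x / y, 1 / y)) / y ^ 2 := by
  have h := (hasDerivAt_comp_curve (a := fun y => x / y) (b := fun y => 1 / y) hf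
    (hasDerivAt_const_div hy) (hasDerivAt_const_div hy)).deriv
  simp only [pdx, pdy, S1map] at h ⊢
  rw [h]
  ring

theorem pdx_comp_S2map {x y : ℂ} (hx : x ≠ 0) (hf : DifferentiableAt ℂ f (1 / x, y / x)) :
    pdx (fun q => f (S2map q)) (x, y) =
      -(pdx f (1 / x, y / x) + y * pdy f (1 / x, y / x)) / x ^ 2 := by
  have h := (hasDerivAt_comp_curve (a := fun x => 1 / x) (b := fun x => y / x) hf
    (hasDerivAt_const_div hx) (hasDerivAt_const_div hx)).deriv
  simp only [pdx, pdy, S2map] at h ⊢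
  rw [h]
  ring

theorem pdy_comp_S2map {x y : ℂ} (hf : DifferentiableAt ℂ f (1 / x, y / x)) :
    pdy (fun q => f (S2map q)) (x, y) = pdy f (1 / x, y / x) / x := by
  have h := (hasDerivAt_comp_curve (a := fun _ => 1 / x) (b := fun y => y / x) hf
    (hasDerivAt_const y _) ((hasDerivAt_id y).div_const x)).deriv
  simp only [pdy, S2map] at h ⊢
  rw [h]
  ring

theorem pdx_pdx_comp_S1map (hD : IsOpen D) (hf : DifferentiableOn ℂ f D) {x y : ℂ}
    (hy : y ≠ 0) (h : (x / y, 1 / y) ∈ D) :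
    pdx (pdx (fun q => f (S1map q))) (x, y) = pdx (pdx f) (x / y, 1 / y) / y ^ 2 := by
  have hev : (fun x => pdx (fun q => f (S1map q)) (x, y)) =ᶠ[𝓝 x]
      fun x => pdx f (S1map (x, y)) / y := by
    have hc : ContinuousAt (fun x : ℂ => (x / y, 1 / y)) x := by fun_prop
    filter_upwards [hc.eventually (hD.mem_nhds h)] with z hz
    exact pdx_comp_S1map (hf.differentiableAt (hD.mem_nhds hz))
  have h1 := pdx_comp_S1map (differentiableAt_pdx hD hf h)
  rw [pdx, hev.deriv_eq, deriv_div_const]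
  rw [pdx] at h1
  rw [h1]
  ring

theorem pdx_pdy_comp_S1map (hD : IsOpen D) (hf : DifferentiableOn ℂ f D) {x y : ℂ}
    (hy : y ≠ 0) (h : (x / y, 1 / y) ∈ D) :
    pdx (pdy (fun q => f (S1map q))) (x, y) =
      -(pdx f (x / y, 1 / y) + (x * pdx (pdx f) (x / y, 1 / y) +
        pdx (pdy f) (x / y, 1 / y)) / y) / y ^ 2 := by
  have hev : (fun x => pdy (fun q => f (S1map q)) (x, y)) =ᶠ[𝓝 x]
      fun x => -(x * pdx f (x / y, 1 / y) + pdy f (x / y, 1 / y)) / y ^ 2 := by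
    have hc : ContinuousAt (fun x : ℂ => (x / y, 1 / y)) x := by fun_prop
    filter_upwards [hc.eventually (hD.mem_nhds h)] with z hz
    exact pdy_comp_S1map hy (hf.differentiableAt (hD.mem_nhds hz))
  have h1 := hasDerivAt_comp_curve (a := fun x => x / y) (b := fun _ => 1 / y)
    (differentiableAt_pdx hD hf h) ((hasDerivAt_id x).div_const y) (hasDerivAt_const x _)
  have h2 := hasDerivAt_comp_curve (a := fun x => x / y) (b := fun _ => 1 / y)
    (differentiableAt_pdy hD hf h) ((hasDerivAt_id x).div_const y) (hasDerivAt_const x _)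
  have h3 := ((((hasDerivAt_id x).mul h1).add h2).neg.div_const (y ^ 2)).deriv
  rw [pdx, hev.deriv_eq]
  refine Eq.trans h3 ?_
  simp only [id]
  ring

theorem pdy_pdy_comp_S2map (hD : IsOpen D) (hf : DifferentiableOn ℂ f D) {x y : ℂ}
    (hx : x ≠ 0) (h : (1 / x, y / x) ∈ D) :
    pdy (pdy (fun q => f (S2map q))) (x, y) = pdy (pdy f) (1 / x, y / x) / x ^ 2 := by
  have hev : (fun y => pdy (fun q => f (S2map q)) (x, y)) =ᶠ[𝓝 y]
      fun y => pdy f (S2map (x, y)) / x := by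
    have hc : ContinuousAt (fun y : ℂ => (1 / x, y / x)) y := by fun_prop
    filter_upwards [hc.eventually (hD.mem_nhds h)] with z hz
    exact pdy_comp_S2map (hf.differentiableAt (hD.mem_nhds hz))
  have h1 := pdy_comp_S2map (differentiableAt_pdy hD hf h)
  rw [pdy, hev.deriv_eq, deriv_div_const]
  rw [pdy] at h1
  rw [h1]
  ring

theorem pdx_pdy_comp_S2map (hD : IsOpen D) (hf : DifferentiableOn ℂ f D) {x y : ℂ}
    (hx : x ≠ 0) (h : (1 / x, y / x) ∈ D) :
    pdx (pdy (fun q => f (S2map q))) (x, y) =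
      -(pdy f (1 / x, y / x) + (pdx (pdy f) (1 / x, y / x) +
        y * pdy (pdy f) (1 / x, y / x)) / x) / x ^ 2 := by
  have hev : (fun x => pdy (fun q => f (S2map q)) (x, y)) =ᶠ[𝓝 x]
      fun x => pdy f (1 / x, y / x) / x := by
    have hc : ContinuousAt (fun x : ℂ => (1 / x, y / x)) x :=
      (hasDerivAt_const_div hx).continuousAt.prodMk (hasDerivAt_const_div hx).continuousAt
    filter_upwards [hc.eventually (hD.mem_nhds h)] with z hz
    exact pdy_comp_S2map (hf.differentiableAt (hD.mem_nhds hz))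
  have h1 := hasDerivAt_comp_curve (a := fun x => 1 / x) (b := fun x => y / x)
    (differentiableAt_pdy hD hf h) (hasDerivAt_const_div hx) (hasDerivAt_const_div hx)
  have h3 := (h1.div (hasDerivAt_id x) hx).deriv
  rw [pdx, hev.deriv_eq]
  refine Eq.trans h3 ?_
  simp only [id]
  field_simp
  ring

end Partials

/-- **Main Proposition 3, part (2).** Transformation of the triangular
s-functions under `S₁` and `S₂`: the parameters `(α,β,γ)` become `(α,−2γ,β+3γ)`. -/
theorem statement17 (α β γ : ℂ) (D : Set (ℂ × ℂ)) (hD : IsOpen D)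
    (hDgood : ∀ p ∈ D, p.1 ≠ 0 ∧ p.1 ≠ 1 ∧ p.2 ≠ 0 ∧ p.2 ≠ 1 ∧ p.1 ≠ p.2)
    (s₁ s₂ : ℂ × ℂ → ℂ)
    (hs₁ : DifferentiableOn ℂ s₁ D) (hs₂ : DifferentiableOn ℂ s₂ D)
    (hJ : ∀ p ∈ D, Jac s₁ s₂ p ≠ 0)
    (h₁ : ∀ p ∈ D, brX s₁ s₂ p = F1 γ p)
    (h₂ : ∀ p ∈ D, brY s₁ s₂ p = F2 γ p)
    (h₃ : ∀ p ∈ D, sqX s₁ s₂ p = P1 α β γ p)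
    (h₄ : ∀ p ∈ D, sqY s₁ s₂ p = P2 α β γ p) :
    ∀ p : ℂ × ℂ, p.1 ≠ 0 → p.1 ≠ 1 → p.2 ≠ 0 → p.2 ≠ 1 → p.1 ≠ p.2 →
      (S1map p ∈ D →
        brX (fun q => s₁ (S1map q)) (fun q => s₂ (S1map q)) p = F1 γ p ∧
        sqX (fun q => s₁ (S1map q)) (fun q => s₂ (S1map q)) p =
          P1 α (-2 * γ) (β + 3 * γ) p) ∧
      (S2map p ∈ D →
        brY (fun q => s₁ (S2map q)) (fun q => s₂ (S2map q)) p = F2 γ p ∧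
        sqY (fun q => s₁ (S2map q)) (fun q => s₂ (S2map q)) p =
          P2 α (-2 * γ) (β + 3 * γ) p) := by
  rintro ⟨x, y⟩ hx hx1 hy hy1 hxy
  dsimp only at hx hx1 hy hy1 hxy
  have hx1' : x - 1 ≠ 0 := sub_ne_zero.2 hx1
  have hy1' : y - 1 ≠ 0 := sub_ne_zero.2 hy1
  have hxy' : x - y ≠ 0 := sub_ne_zero.2 hxy
  have hyx' : y - x ≠ 0 := sub_ne_zero.2 hxy.symm
  constructor
  · intro hp
    replace hp : (x / y, 1 / y) ∈ D := hp
    have e1 := (div_eq_iff (hJ _ hp)).1 (h₁ _ hp)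
    have e3 := (div_eq_iff (hJ _ hp)).1 (h₃ _ hp)
    have d1 := hs₁.differentiableAt (hD.mem_nhds hp)
    have d2 := hs₂.differentiableAt (hD.mem_nhds hp)
    have hF : F1 γ (x / y, 1 / y) = -F1 γ (x, y) := by
      have : x / y - 1 / y = (x - 1) / y := by ring
      have h' : x / y - 1 = (x - y) / y := by field_simp
      have h'' : 1 / y - 1 = (1 - y) / y := by field_simp
      simp only [F1, this, h', h'']
      field_simp
      ring
    have hP : 3 * x * F1 γ (x / y, 1 / y) + P1 α β γ (x / y, 1 / y) =
        y * P1 α (-2 * γ) (β + 3 * γ) (x, y) := by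
      have : x / y - 1 / y = (x - 1) / y := by ring
      have h' : x / y - 1 = (x - y) / y := by field_simp
      rw [hF]
      simp only [F1, P1, this, h']
      field_simp
      ring
    have hJu : Jac (fun q => s₁ (S1map q)) (fun q => s₂ (S1map q)) (x, y) =
        -Jac s₁ s₂ (x / y, 1 / y) / y ^ 3 := by
      simp only [Jac, pdx_comp_S1map d1, pdx_comp_S1map d2, pdy_comp_S1map hy d1,
        pdy_comp_S1map hy d2]
      field_simp
      ring
    have hJ0 : Jac (fun q => s₁ (S1map q)) (fun q => s₂ (S1map q)) (x, y) ≠ 0 := by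
      rw [hJu]
      exact div_ne_zero (neg_ne_zero.2 (hJ _ hp)) (pow_ne_zero _ hy)
    constructor
    · rw [brX, div_eq_iff hJ0, hJu, pdx_comp_S1map d1, pdx_comp_S1map d2,
        pdx_pdx_comp_S1map hD hs₁ hy hp, pdx_pdx_comp_S1map hD hs₂ hy hp]
      rw [hF] at e1
      linear_combination e1 / y ^ 3
    · rw [sqX, div_eq_iff hJ0, hJu, pdx_comp_S1map d1, pdx_comp_S1map d2,
        pdy_comp_S1map hy d1, pdy_comp_S1map hy d2,
        pdx_pdx_comp_S1map hD hs₁ hy hp, pdx_pdx_comp_S1map hD hs₂ hy hp,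
        pdx_pdy_comp_S1map hD hs₁ hy hp, pdx_pdy_comp_S1map hD hs₂ hy hp]
      have hP' : P1 α (-2 * γ) (β + 3 * γ) (x, y) =
          (3 * x * F1 γ (x / y, 1 / y) + P1 α β γ (x / y, 1 / y)) / y := by
        rw [hP]; field_simp
      rw [hP']
      linear_combination -(3 * x * e1 + e3) / y ^ 4
  · intro hp
    replace hp : (1 / x, y / x) ∈ D := hp
    have e2 := (div_eq_iff (hJ _ hp)).1 (h₂ _ hp)
    have e4 := (div_eq_iff (hJ _ hp)).1 (h₄ _ hp)
    have d1 := hs₁.differentiableAt (hD.mem_nhds hp)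
    have d2 := hs₂.differentiableAt (hD.mem_nhds hp)
    have hF : F2 γ (1 / x, y / x) = -F2 γ (x, y) := by
      have : y / x - 1 / x = (y - 1) / x := by ring
      have h' : y / x - 1 = (y - x) / x := by field_simp
      have h'' : 1 / x - 1 = (1 - x) / x := by field_simp
      simp only [F2, this, h', h'']
      field_simp
      ring
    have hP : P2 α (-2 * γ) (β + 3 * γ) (x, y) =
        (3 * y * F2 γ (1 / x, y / x) + P2 α β γ (1 / x, y / x)) / x := by
      have : y / x - 1 / x = (y - 1) / x := by ring
      have h' : y / x - 1 = (y - x) / x := by field_simp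
      rw [hF]
      simp only [F2, P2, this, h']
      field_simp
      ring
    have hJu : Jac (fun q => s₁ (S2map q)) (fun q => s₂ (S2map q)) (x, y) =
        -Jac s₁ s₂ (1 / x, y / x) / x ^ 3 := by
      simp only [Jac, pdx_comp_S2map hx d1, pdx_comp_S2map hx d2, pdy_comp_S2map d1,
        pdy_comp_S2map d2]
      field_simp
      ring
    have hJ0 : Jac (fun q => s₁ (S2map q)) (fun q => s₂ (S2map q)) (x, y) ≠ 0 := by
      rw [hJu]
      exact div_ne_zero (neg_ne_zero.2 (hJ _ hp)) (pow_ne_zero _ hx)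
    constructor
    · rw [brY, div_eq_iff hJ0, hJu, pdy_comp_S2map d1, pdy_comp_S2map d2,
        pdy_pdy_comp_S2map hD hs₁ hx hp, pdy_pdy_comp_S2map hD hs₂ hx hp]
      rw [hF] at e2
      linear_combination e2 / x ^ 3
    · rw [sqY, div_eq_iff hJ0, hJu, pdx_comp_S2map hx d1, pdx_comp_S2map hx d2,
        pdy_comp_S2map d1, pdy_comp_S2map d2,
        pdy_pdy_comp_S2map hD hs₁ hx hp, pdy_pdy_comp_S2map hD hs₂ hx hp,
        pdx_pdy_comp_S2map hD hs₁ hx hp, pdx_pdy_comp_S2map hD hs₂ hx hp, hP]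
      linear_combination -(3 * y * e2 + e4) / x ^ 4
end
end
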